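/- Let 𝒪 be a polynomial ring over a field k of characteristic zero, 𝔥 ⊆ 𝔤 complete intersection ideals of grades p and n, with 𝒪/𝔤 reduced and Spec(𝒪/𝔤) connected, and the localization of 𝒪/𝔥 at (the image of) every minimal prime of 𝔤 a regular local ring. Suppose 𝔤 is generated by an 𝒪-regular sequence g₁,…,g_n and 𝔥 by h₁,…,h_p with h_i ≡ Σ_{j=1}^p b_{ij} g_j mod 𝔤², and set b = det(b_{ij}). If the 𝒪/𝔤-module T(M) has finite length, then length_{𝒪/𝔤}(T(M)) = length_{𝒪/𝔤}(𝒪/((b) + 𝔤)). -/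

import Mathlib

open Ideal

/-- `ξ ∈ Der_h(O)`: the derivation `ξ` preserves the ideal `h`. -/
def PreservesIdeal {k O : Type*} [CommRing k] [CommRing O] [Algebra k O]
    (h : Ideal O) (xi : Derivation k O O) : Prop :=
  ∀ x ∈ h, xi x ∈ h

/-- The primitive ideal `∫_h g` of `g` relative to `h`: all `f ∈ g` such that
`ξ f ∈ g` for every derivation `ξ` preserving `h`. -/
def primitiveIdeal (k : Type*) {O : Type*} [CommRing k] [CommRing O] [Algebra k O]
    (h g : Ideal O) : Ideal O where
  carrier := {f | f ∈ g ∧ ∀ xi : Derivation k O O, PreservesIdeal h xi → xi f ∈ g}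
  add_mem' := fun {a b} ha hb =>
    ⟨g.add_mem ha.1 hb.1, fun xi hxi => by
      rw [map_add]; exact g.add_mem (ha.2 xi hxi) (hb.2 xi hxi)⟩
  zero_mem' := ⟨g.zero_mem, fun xi _ => by simp⟩
  smul_mem' := fun c f hf =>
    ⟨g.smul_mem c hf.1, fun xi hxi => by
      rw [smul_eq_mul, Derivation.leibniz]
      exact g.add_mem (g.smul_mem _ (hf.2 xi hxi))
        (by rw [smul_eq_mul]; exact Ideal.mul_mem_right _ g hf.1)⟩

/-- The set of elements of `g` whose class in the conormal module `M = g/(g² + h)` is a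
torsion element over `O/g`, i.e. is killed by a non-zero-divisor of `O/g`.  This is the
preimage in `O` of the torsion submodule `T(M)` of `M`. -/
def torsionSet {O : Type*} [CommRing O] (h g : Ideal O) : Set O :=
  {f | f ∈ g ∧ ∃ β : O,
    Ideal.Quotient.mk g β ∈ nonZeroDivisors (O ⧸ g) ∧ β * f ∈ g ^ 2 ⊔ h}

/-- A regular local ring: a noetherian local ring whose maximal ideal can be generated by
Krull-dimension many elements. -/
def IsRegularLocal (R : Type*) [CommRing R] : Prop :=
  IsNoetherianRing R ∧ IsLocalRing R ∧ ∃ s : Finset R,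
    (Ideal.span (s : Set R)).IsMaximal ∧ (s.card : WithBot ℕ∞) = ringKrullDim R

/-- The localization of `R` at a prime ideal (with the primality assumption explicit). -/
abbrev locAt {R : Type*} [CommRing R] (q : Ideal R) (hq : q.IsPrime) : Type _ :=
  @Localization.AtPrime R _ q hq

/-- The localization of `O/h` at the image of the prime `p` is a regular local ring. -/
def regularAtImage {O : Type*} [CommRing O] (h p : Ideal O) : Prop :=
  ∀ hP : (p.map (Ideal.Quotient.mk h)).IsPrime,
    IsRegularLocal (locAt (p.map (Ideal.Quotient.mk h)) hP)

/-- The submodule of relations defining the conormal module `M = g/(g² + h)`. -/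
def conormalRel {O : Type*} [CommRing O] (h g : Ideal O) : Submodule O ↥g :=
  Submodule.comap (Submodule.subtype (g : Submodule O O)) (g ^ 2 ⊔ h)

/-- The conormal module `M = g/(g² + h)` (as an `O`-module; it is killed by `g`, so its
`O`-submodule lattice coincides with its `O/g`-submodule lattice). -/
abbrev Conormal {O : Type*} [CommRing O] (h g : Ideal O) :=
  ↥g ⧸ conormalRel h g

/-- The torsion submodule `T(M)` of the conormal module: elements killed by some element
of `O` that is a non-zero-divisor modulo `g`. -/
def conormalTorsion {O : Type*} [CommRing O] (h g : Ideal O) :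
    Submodule O (Conormal h g) where
  carrier := {x | ∃ β : O, Ideal.Quotient.mk g β ∈ nonZeroDivisors (O ⧸ g) ∧ β • x = 0}
  zero_mem' := ⟨1, by simpa using Submonoid.one_mem _, by simp⟩
  add_mem' := fun {x y} hx hy => by
    obtain ⟨α, hα, hax⟩ := hx
    obtain ⟨β, hβ, hby⟩ := hy
    refine ⟨α * β, by rw [_root_.map_mul]; exact mul_mem hα hβ, ?_⟩
    have h1 : (α * β) • x = β • (α • x) := by rw [mul_comm, mul_smul]
    rw [smul_add, h1, hax, mul_smul, hby, smul_zero, smul_zero, add_zero]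
  smul_mem' := fun c x hx => by
    obtain ⟨β, hβ, hbx⟩ := hx
    exact ⟨β, hβ, by rw [smul_comm, hbx, smul_zero]⟩

/-- The length of a module: the Krull dimension of its lattice of submodules. -/
noncomputable def moduleLength (R M : Type*) [CommRing R] [AddCommGroup M]
    [Module R M] : WithBot ℕ∞ :=
  Order.krullDim (Submodule R M)

section DeterminantLength

variable (R : Type*) {A : Type*} [CommRing R] [CommRing A] [Algebra R A]

/-- The length over `R` of the cokernel of an endomorphism is additive under composition. -/
theorem length_quotient_range_comp {M : Type*} [AddCommGroup M] [Module A M] [Module R M]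
    [IsScalarTower R A M] (f g : M →ₗ[A] M) (hf : Function.Injective f) :
    Module.length R (M ⧸ LinearMap.range (f ∘ₗ g)) =
      Module.length R (M ⧸ LinearMap.range g) + Module.length R (M ⧸ LinearMap.range f) := by
  have hfg : LinearMap.range g ≤ (LinearMap.range (f ∘ₗ g)).comap f := by
    rintro _ ⟨x, rfl⟩
    exact ⟨x, rfl⟩
  have hle : LinearMap.range (f ∘ₗ g) ≤ LinearMap.range f := LinearMap.range_comp_le_range g f
  refine Module.length_eq_add_of_exact
    ((Submodule.mapQ _ _ f hfg).restrictScalars R) ((Submodule.factor hle).restrictScalars R)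
    ?_ (Submodule.factor_surjective hle) ?_
  · rw [LinearMap.coe_restrictScalars, ← LinearMap.ker_eq_bot, eq_bot_iff]
    intro x hx
    obtain ⟨x, rfl⟩ := Submodule.mkQ_surjective _ x
    obtain ⟨y, hy⟩ : f x ∈ LinearMap.range (f ∘ₗ g) := by
      simpa [Submodule.mapQ_apply] using hx
    simpa using ⟨y, hf hy⟩
  · intro x
    obtain ⟨x, rfl⟩ := Submodule.mkQ_surjective _ x
    constructor
    · intro hx
      obtain ⟨y, hy⟩ : x ∈ LinearMap.range f := by simpa using hx
      exact ⟨Submodule.mkQ _ y, by simp [hy]⟩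
    · rintro ⟨y, hy⟩
      obtain ⟨y, rfl⟩ := Submodule.mkQ_surjective _ y
      rw [← hy]
      simp

/-- The length over `R` of the cokernel of an endomorphism is invariant under conjugation. -/
theorem length_quotient_range_conj {M N : Type*} [AddCommGroup M] [Module A M] [Module R M]
    [IsScalarTower R A M] [AddCommGroup N] [Module A N] [Module R N] [IsScalarTower R A N]
    (e : M ≃ₗ[A] N) (f : M →ₗ[A] M) (g : N →ₗ[A] N) (h : ∀ x, e (f x) = g (e x)) :
    Module.length R (M ⧸ LinearMap.range f) = Module.length R (N ⧸ LinearMap.range g) := by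
  refine ((Submodule.Quotient.equiv _ _ e ?_).restrictScalars R).length_eq
  ext y
  constructor
  · rintro ⟨_, ⟨x, rfl⟩, rfl⟩
    exact ⟨e x, (h x).symm⟩
  · rintro ⟨x, rfl⟩
    exact ⟨f (e.symm x), ⟨_, rfl⟩, by simp [h]⟩

/-- The length over `R` of the cokernel is additive under direct sums of endomorphisms. -/
theorem length_quotient_range_prodMap {M N : Type*} [AddCommGroup M] [Module A M] [Module R M]
    [IsScalarTower R A M] [AddCommGroup N] [Module A N] [Module R N] [IsScalarTower R A N]
    (f : M →ₗ[A] M) (g : N →ₗ[A] N) :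
    Module.length R ((M × N) ⧸ LinearMap.range (f.prodMap g)) =
      Module.length R (M ⧸ LinearMap.range f) + Module.length R (N ⧸ LinearMap.range g) := by
  rw [← Module.length_prod]
  let φ : (M × N) →ₗ[A] (M ⧸ LinearMap.range f) × (N ⧸ LinearMap.range g) :=
    (Submodule.mkQ _).prodMap (Submodule.mkQ _)
  have hφ : Function.Surjective φ :=
    (Submodule.mkQ_surjective _).prodMap (Submodule.mkQ_surjective _)
  have hker : LinearMap.range (f.prodMap g) = LinearMap.ker φ := by
    rw [LinearMap.range_prodMap, LinearMap.ker_prodMap, Submodule.ker_mkQ, Submodule.ker_mkQ]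
  exact (((Submodule.quotEquivOfEq _ _ hker).trans
    (φ.quotKerEquivOfSurjective hφ)).restrictScalars R).length_eq

/-- The length over `R` of the cokernel of a square matrix. -/
noncomputable def Matrix.cokerLength {ι : Type*} [Fintype ι] (B : Matrix ι ι A) : ℕ∞ :=
  Module.length R ((ι → A) ⧸ LinearMap.range B.mulVecLin)

/-- The length over `R` of the quotient of `A` by a principal ideal. -/
noncomputable def principalLength (x : A) : ℕ∞ :=
  Module.length R (A ⧸ Ideal.span {x})

theorem principalLength_eq_length_quotient_range (x : A) :
    principalLength R x = Module.length R (A ⧸ LinearMap.range (LinearMap.mulLeft A x)) := by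
  refine ((Submodule.quotEquivOfEq _ _ ?_).restrictScalars R).length_eq
  ext y
  simp [Ideal.mem_span_singleton', mul_comm]

theorem principalLength_mul {x : A} (hx : x ∈ nonZeroDivisors A) (y : A) :
    principalLength R (x * y) = principalLength R x + principalLength R y := by
  have := length_quotient_range_comp R (LinearMap.mulLeft A x) (LinearMap.mulLeft A y)
    (fun a b hab => (mul_cancel_left_mem_nonZeroDivisors hx).1 hab)
  rw [← LinearMap.mulLeft_mul] at this
  simp only [principalLength_eq_length_quotient_range, this, add_comm]

theorem principalLength_le_of_dvd {x y : A} (hxy : x ∣ y) :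
    principalLength R x ≤ principalLength R y := by
  have hle := Ideal.span_singleton_le_span_singleton.2 hxy
  exact Module.length_le_of_surjective
    ((Submodule.factor hle : (A ⧸ Ideal.span {y}) →ₗ[A] _).restrictScalars R)
    (Submodule.factor_surjective hle)

theorem principalLength_pow {x : A} (hx : x ∈ nonZeroDivisors A) (n : ℕ) :
    principalLength R (x ^ n) = n • principalLength R x := by
  induction n with
  | zero =>
    have : Subsingleton (A ⧸ Ideal.span {(1 : A)}) := by
      simp
    simp [principalLength, Module.length_eq_zero]
  | succ n ih => rw [pow_succ', principalLength_mul R hx, ih, succ_nsmul']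

theorem Matrix.cokerLength_submatrix_equiv {ι κ : Type*} [Fintype ι] [Fintype κ] (e : κ ≃ ι)
    (B : Matrix ι ι A) :
    (B.submatrix e e).cokerLength R = B.cokerLength R := by
  refine length_quotient_range_conj R (LinearEquiv.funCongrLeft A A e.symm) _ _ fun x => ?_
  ext i
  simp [Matrix.mulVec, dotProduct, LinearMap.funLeft, ← e.sum_comp]

theorem Matrix.cokerLength_fromBlocks_diagonal {ι κ : Type*} [Fintype ι] [Fintype κ]
    (B : Matrix ι ι A) (C : Matrix κ κ A) :
    (Matrix.fromBlocks B 0 0 C).cokerLength R = B.cokerLength R + C.cokerLength R := by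
  rw [Matrix.cokerLength, Matrix.cokerLength, Matrix.cokerLength,
    ← length_quotient_range_prodMap]
  refine length_quotient_range_conj R (LinearEquiv.sumArrowLequivProdArrow ι κ A A) _ _ fun x => ?_
  ext i <;>
  simp [Matrix.fromBlocks_mulVec, LinearEquiv.sumArrowLequivProdArrow, Equiv.sumArrowEquivProdArrow,
      Function.comp_def]

theorem Matrix.cokerLength_unique {κ : Type*} [Fintype κ] [Unique κ] (C : Matrix κ κ A) :
    C.cokerLength R = principalLength R (C default default) := by
  rw [principalLength_eq_length_quotient_range]
  refine length_quotient_range_conj R (LinearEquiv.funUnique κ A A) _ _ fun x => ?_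
  simp [Matrix.mulVec, dotProduct]

variable {ι : Type*} [Fintype ι] [DecidableEq ι]

theorem Matrix.mulVecLin_injective_of_det_mem_nonZeroDivisors {B : Matrix ι ι A}
    (hB : B.det ∈ nonZeroDivisors A) : Function.Injective B.mulVecLin := by
  rw [← LinearMap.ker_eq_bot, LinearMap.ker_eq_bot']
  intro x hx
  have h0 : B.det • x = 0 := by
    rw [← Matrix.one_mulVec x, ← Matrix.smul_mulVec, ← Matrix.adjugate_mul,
      ← Matrix.mulVec_mulVec, ← Matrix.mulVecLin_apply B, hx, Matrix.mulVec_zero]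
  ext i
  exact (mul_right_mem_nonZeroDivisors_eq_zero_iff hB).1 (by
    simpa [mul_comm] using congrFun h0 i)

theorem Matrix.cokerLength_mul {B : Matrix ι ι A} (hB : B.det ∈ nonZeroDivisors A)
    (C : Matrix ι ι A) : (B * C).cokerLength R = B.cokerLength R + C.cokerLength R := by
  rw [Matrix.cokerLength, Matrix.mulVecLin_mul, length_quotient_range_comp R _ _
    (Matrix.mulVecLin_injective_of_det_mem_nonZeroDivisors hB), add_comm]
  rfl

theorem Matrix.cokerLength_eq_zero_of_isUnit_det {B : Matrix ι ι A} (hB : IsUnit B.det) :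
    B.cokerLength R = 0 := by
  have htop : LinearMap.range B.mulVecLin = ⊤ := LinearMap.range_eq_top.2 fun x =>
    ⟨B⁻¹.mulVec x, by simp [Matrix.mul_nonsing_inv _ hB]⟩
  have : Subsingleton ((ι → A) ⧸ LinearMap.range B.mulVecLin) :=
    Submodule.Quotient.subsingleton_iff.2 htop
  exact Module.length_eq_zero

/-- A non-zero-divisor `x` of `A` such that `A ⧸ (x)` has finite length over `R`. -/
def HasFinitePrincipalLength (x : A) : Prop :=
  x ∈ nonZeroDivisors A ∧ principalLength R x ≠ ⊤

variable {R} in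
theorem HasFinitePrincipalLength.mul {x y : A} (hx : HasFinitePrincipalLength R x)
    (hy : HasFinitePrincipalLength R y) : HasFinitePrincipalLength R (x * y) :=
  ⟨mul_mem hx.1 hy.1, by
    rw [principalLength_mul R hx.1]
    exact WithTop.add_ne_top.2 ⟨hx.2, hy.2⟩⟩

variable {R} in
theorem HasFinitePrincipalLength.pow {x : A} (hx : HasFinitePrincipalLength R x) (n : ℕ) :
    HasFinitePrincipalLength R (x ^ n) :=
  ⟨pow_mem hx.1 n, by
    rw [principalLength_pow R hx.1, nsmul_eq_mul]
    exact WithTop.mul_ne_top (ENat.natCast_ne_top n) hx.2⟩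

variable {R} in
theorem HasFinitePrincipalLength.of_dvd {x y : A} (hy : HasFinitePrincipalLength R y)
    (hxy : x ∣ y) : HasFinitePrincipalLength R x := by
  refine ⟨?_, ne_top_of_le_ne_top hy.2 (principalLength_le_of_dvd R hxy)⟩
  obtain ⟨z, rfl⟩ := hxy
  exact (mul_mem_nonZeroDivisors.1 hy.1).1

/-- If a finite-length element is found in every coset `w + (y₁, …, yₙ)` for which the ideal
`(w, y₁, …, yₙ)` contains one, then the cokernel of a square matrix over `A` has the same
length as the quotient of `A` by the determinant. -/
theorem Matrix.cokerLength_eq_principalLength_det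
    (hpivot : ∀ (n : ℕ) (y : Fin n → A) (w x : A), HasFinitePrincipalLength R x →
      x ∈ Ideal.span (insert w (Set.range y)) →
      ∃ t : Fin n → A, HasFinitePrincipalLength R (∑ i, t i * y i + w))
    (n : ℕ) (B : Matrix (Fin n) (Fin n) A) (hB : HasFinitePrincipalLength R B.det) :
    B.cokerLength R = principalLength R B.det := by
  induction n with
  | zero =>
    rw [Matrix.cokerLength_eq_zero_of_isUnit_det R (by simp), Matrix.det_isEmpty,
      ← pow_zero (1 : A), principalLength_pow R (one_mem _), zero_nsmul]
  | succ n ih =>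
    let e : Fin n ⊕ Fin 1 ≃ Fin (n + 1) := finSumFinEquiv
    set C := B.submatrix e e with hC
    have hdetC : C.det = B.det := Matrix.det_submatrix_equiv_self e B
    obtain ⟨t, ht⟩ := hpivot n (fun i => C (.inl i) (.inr 0)) (C (.inr 0) (.inr 0)) B.det hB (by
      have h1 : B.det = ∑ k, C.adjugate (.inr 0) k * C k (.inr 0) := by
        rw [← hdetC, ← Matrix.mul_apply, Matrix.adjugate_mul]
        simp
      rw [h1]
      refine Ideal.sum_mem _ fun k _ => Ideal.mul_mem_left _ _ (Ideal.subset_span ?_)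
      rcases k with k | k
      · exact Or.inr ⟨k, rfl⟩
      · exact Or.inl (by rw [Subsingleton.elim k 0]))
    let U : Matrix (Fin n ⊕ Fin 1) (Fin n ⊕ Fin 1) A :=
      Matrix.fromBlocks 1 0 (Matrix.of fun _ j => t j) 1
    have hU : U.det = 1 := by simp [U]
    obtain ⟨E, hE⟩ : ∃ E, E = U * C := ⟨_, rfl⟩
    have hdetE : E.det = B.det := by rw [hE, Matrix.det_mul, hU, one_mul, hdetC]
    have hlenE : E.cokerLength R = B.cokerLength R := by
      rw [hE, Matrix.cokerLength_mul R (by simp [hU]),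
        Matrix.cokerLength_eq_zero_of_isUnit_det R (by simp [hU]), zero_add,
        hC, Matrix.cokerLength_submatrix_equiv]
    set a := E (.inr 0) (.inr 0) with ha
    have hagood : HasFinitePrincipalLength R a := by
      convert ht
      simp [ha, hE, U, Matrix.mul_apply, Matrix.fromBlocks]
    have hW : E.toBlocks₂₂ = a • (1 : Matrix (Fin 1) (Fin 1) A) := by
      ext i j
      simp [Subsingleton.elim i 0, Subsingleton.elim j 0, Matrix.toBlocks₂₂, ha]
    set X := E.toBlocks₁₁
    set Y := E.toBlocks₁₂
    set Z := E.toBlocks₂₁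
    set V := a • X - Y * Z with hV
    have hEblock : E = Matrix.fromBlocks X Y Z (a • 1) := by
      rw [← hW, Matrix.fromBlocks_toBlocks]
    have key : Matrix.fromBlocks (a • (1 : Matrix (Fin n) (Fin n) A)) 0 0 1 * E =
        Matrix.fromBlocks 1 Y 0 1 * (Matrix.fromBlocks V 0 0 1 *
          (Matrix.fromBlocks 1 0 Z 1 * Matrix.fromBlocks 1 0 0 (a • 1))) := by
      rw [hEblock]
      simp [Matrix.fromBlocks_multiply, hV]
    have hdet : a ^ n * B.det = V.det * a := by
      have := congrArg Matrix.det key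
      simpa [hdetE, Matrix.det_smul] using this
    have hgood : HasFinitePrincipalLength R (V.det * a) := hdet ▸ (hagood.pow n).mul hB
    have hVgood : HasFinitePrincipalLength R V.det := hgood.of_dvd ⟨a, rfl⟩
    have hlen := congrArg (Matrix.cokerLength R) key
    rw [Matrix.cokerLength_mul R (by simpa [Matrix.det_smul] using (hagood.pow n).1),
      Matrix.cokerLength_mul R (by simp), Matrix.cokerLength_mul R (by simpa using hVgood.1),
      Matrix.cokerLength_mul R (by simp)] at hlen
    simp only [Matrix.cokerLength_fromBlocks_diagonal] at hlen
    rw [Matrix.cokerLength_eq_zero_of_isUnit_det R (B := Matrix.fromBlocks 1 Y 0 1) (by simp),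
      Matrix.cokerLength_eq_zero_of_isUnit_det R (B := Matrix.fromBlocks 1 0 Z 1) (by simp),
      Matrix.cokerLength_eq_zero_of_isUnit_det R (B := (1 : Matrix (Fin 1) (Fin 1) A)) (by simp),
      Matrix.cokerLength_eq_zero_of_isUnit_det R (B := (1 : Matrix (Fin n) (Fin n) A)) (by simp),
      Matrix.cokerLength_unique R (κ := Fin 1), ih V hVgood,
      ih (a • 1) (by simpa [Matrix.det_smul] using hagood.pow n), hlenE] at hlen
    simp only [Matrix.det_smul, Fintype.card_fin, Matrix.det_one, mul_one, add_zero, zero_add,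
      Matrix.smul_apply, Matrix.one_apply_eq, smul_eq_mul] at hlen
    have hpr := congrArg (principalLength R) hdet
    rw [principalLength_mul R (hagood.pow n).1, principalLength_mul R hVgood.1, ← hlen] at hpr
    exact ((ENat.add_right_injective_of_ne_top (hagood.pow n).2) hpr).symm

end DeterminantLength

section ZariskiLocalization

variable {A : Type*} [CommRing A]

/-- The submonoid of elements congruent to `1` modulo `b`. -/
def oneModSubmonoid (b : A) : Submonoid A where
  carrier := {x | b ∣ x - 1}
  one_mem' := by simp
  mul_mem' := by
    rintro x y ⟨c, hc⟩ ⟨d, hd⟩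
    exact ⟨c * y + d, by linear_combination y * hc + hd⟩

theorem algebraMap_mem_of_isMaximal_localization_oneModSubmonoid {b : A}
    {A' : Type*} [CommRing A'] [Algebra A A'] [IsLocalization (oneModSubmonoid b) A']
    (m : Ideal A') [hm : m.IsMaximal] : algebraMap A A' b ∈ m := by
  by_contra hb
  obtain ⟨y, z, hz, hyz⟩ := hm.exists_inv hb
  obtain ⟨⟨c, s⟩, hcs⟩ := IsLocalization.surj (oneModSubmonoid b) y
  have hmem : algebraMap A A' (s - b * c) ∈ m := by
    have : algebraMap A A' (s - b * c) = algebraMap A A' s * z := by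
      rw [map_sub, map_mul, ← hcs]
      linear_combination (-algebraMap A A' s) * hyz
    rw [this]
    exact m.mul_mem_left _ hz
  refine hm.ne_top (m.eq_top_of_isUnit_mem hmem
    (IsLocalization.map_units A' (⟨s - b * c, ?_⟩ : oneModSubmonoid b)))
  obtain ⟨d, hd⟩ := s.2
  exact ⟨d - c, by linear_combination hd⟩

variable (R : Type*) [CommRing R] [Algebra R A]

/-- Inverting the elements congruent to `1` modulo the determinant does not change the cokernel. -/
theorem Matrix.cokerLength_map_localization_oneModSubmonoid {ι : Type*} [Fintype ι]
    [DecidableEq ι] (B : Matrix ι ι A) (A' : Type*) [CommRing A'] [Algebra A A'] [Algebra R A']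
    [IsScalarTower R A A'] [IsLocalization (oneModSubmonoid B.det) A'] :
    (B.map (algebraMap A A')).cokerLength R = B.cokerLength R := by
  set B' := B.map (algebraMap A A') with hB'
  have hdet : B'.det = algebraMap A A' B.det := (RingHom.map_det _ _).symm
  have hrange (x : ι → A) : B.det • x ∈ LinearMap.range B.mulVecLin :=
    ⟨B.adjugate.mulVec x, by simp [Matrix.mul_adjugate, Matrix.smul_mulVec]⟩
  have hrange' (x : ι → A') : B'.det • x ∈ LinearMap.range B'.mulVecLin :=
    ⟨B'.adjugate.mulVec x, by simp [Matrix.mul_adjugate, Matrix.smul_mulVec]⟩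
  let incl : (ι → A) →ₗ[A] (ι → A') := (Algebra.linearMap A A').compLeft ι
  have hincl (x : ι → A) (i : ι) : incl x i = algebraMap A A' (x i) := rfl
  have hinclB (x : ι → A) : incl (B.mulVec x) = B'.mulVec (incl x) := by
    ext i
    rw [hincl, RingHom.map_mulVec]
    rfl
  have hden (y : ι → A') : ∃ (s : oneModSubmonoid B.det) (x : ι → A), incl x = (s : A) • y := by
    obtain ⟨s, hs⟩ := IsLocalization.exist_integer_multiples_of_finite (oneModSubmonoid B.det) y
    choose x hx using hs
    exact ⟨s, x, funext hx⟩
  let φ : (ι → A) →ₗ[A] ((ι → A') ⧸ LinearMap.range B'.mulVecLin) :=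
    (Submodule.mkQ (LinearMap.range B'.mulVecLin)).restrictScalars A ∘ₗ incl
  have hφ : Function.Surjective φ := by
    intro y
    obtain ⟨y, rfl⟩ := Submodule.mkQ_surjective _ y
    obtain ⟨s, x, hx⟩ := hden y
    obtain ⟨d, hd⟩ := s.2
    refine ⟨x, ?_⟩
    have hxy : incl x - y = B'.det • algebraMap A A' d • y := by
      ext i
      have hd' := congrArg (algebraMap A A') hd
      simp only [map_sub, map_mul, map_one] at hd'
      simp only [hx, Pi.sub_apply, Pi.smul_apply, hdet, smul_eq_mul]
      rw [Algebra.smul_def]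
      linear_combination y i * hd'
    simp only [φ, LinearMap.comp_apply, LinearMap.restrictScalars_apply, Submodule.mkQ_apply]
    rw [Submodule.Quotient.eq, hxy]
    exact hrange' _
  have hker : LinearMap.range B.mulVecLin = LinearMap.ker φ := by
    ext x
    have hmem : x ∈ LinearMap.ker φ ↔ incl x ∈ LinearMap.range B'.mulVecLin := by
      simp [φ]
    rw [hmem]
    constructor
    · rintro ⟨z, rfl⟩
      exact ⟨incl z, (hinclB z).symm⟩
    · rintro ⟨y, hy⟩
      obtain ⟨s, z, hz⟩ := hden y
      have heq : incl ((s : A) • x) = incl (B.mulVec z) := by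
        rw [hinclB, map_smul, ← hy, hz, Matrix.mulVecLin_apply, Matrix.mulVec_smul]
      have hex (i : ι) : ∃ u : oneModSubmonoid B.det,
          (u : A) * ((s : A) • x) i = u * (B.mulVec z) i :=
        (IsLocalization.eq_iff_exists (oneModSubmonoid B.det) A').1 (congrFun heq i)
      choose u hu using hex
      have hprod : (∏ i, (u i : A)) • (s : A) • x = B.mulVec ((∏ i, (u i : A)) • z) := by
        rw [Matrix.mulVec_smul]
        ext i
        have hui := hu i
        simp only [Pi.smul_apply, smul_eq_mul] at hui ⊢
        rw [← Finset.prod_erase_mul _ _ (Finset.mem_univ i)]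
        linear_combination (∏ j ∈ Finset.univ.erase i, (u j : A)) * hui
      have hw : (∏ i, (u i : A)) * s ∈ oneModSubmonoid B.det :=
        mul_mem (prod_mem fun i _ => (u i).2) s.2
      obtain ⟨d, hd⟩ := hw
      have hx : x = B.mulVec ((∏ i, (u i : A)) • z) - B.det • d • x := by
        rw [← hprod]
        ext i
        simp only [Pi.sub_apply, Pi.smul_apply, smul_eq_mul]
        linear_combination (-x i) * hd
      rw [hx]
      exact sub_mem ⟨_, rfl⟩ (hrange _)
  exact (((Submodule.quotEquivOfEq _ _ hker).trans
    (φ.quotKerEquivOfSurjective hφ)).restrictScalars R).length_eq.symm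

theorem principalLength_map_localization_oneModSubmonoid (b : A) (A' : Type*) [CommRing A']
    [Algebra A A'] [Algebra R A'] [IsScalarTower R A A'] [IsLocalization (oneModSubmonoid b) A'] :
    principalLength R (algebraMap A A' b) = principalLength R b := by
  have hb : b = (Matrix.of fun _ _ : Unit => b).det := by simp
  have : IsLocalization (oneModSubmonoid (Matrix.of fun _ _ : Unit => b).det) A' := by
    rwa [← hb]
  simpa [Matrix.cokerLength_unique] using
    Matrix.cokerLength_map_localization_oneModSubmonoid R (Matrix.of fun _ _ : Unit => b) A'

/-- In a reduced Noetherian ring an element outside all minimal primes is a non-zero-divisor. -/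
theorem mem_nonZeroDivisors_of_forall_notMem_minimalPrimes [IsReduced A] {a : A}
    (ha : ∀ q ∈ minimalPrimes A, a ∉ q) : a ∈ nonZeroDivisors A := by
  rw [mem_nonZeroDivisors_iff_right]
  intro x hx
  have hmem : x ∈ sInf (minimalPrimes A) := by
    rw [Ideal.mem_sInf]
    intro q hq
    exact (hq.1.1.mem_or_mem (show x * a ∈ q by rw [hx]; exact q.zero_mem)).resolve_right (ha q hq)
  rw [minimalPrimes, Ideal.sInf_minimalPrimes] at hmem
  have hnil : x ∈ nilradical A := hmem
  rwa [nilradical_eq_zero] at hnil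

/-- Over an infinite field, a sufficiently general element of the coset of an ideal avoids
finitely many primes. -/
theorem exists_sum_add_notMem_of_infinite (k : Type*) [Field k] [Infinite k] [Algebra k A]
    (P : Set (Ideal A)) (hP : P.Finite) (hprime : ∀ q ∈ P, q.IsPrime) {n : ℕ} (y : Fin n → A)
    (w : A) (hw : ∀ q ∈ P, ¬ Ideal.span (insert w (Set.range y)) ≤ q) :
    ∃ t : Fin n → A, ∀ q ∈ P, ∑ i, t i * y i + w ∉ q := by
  let f (q : Ideal A) : Polynomial (A ⧸ q) :=
    ∑ i : Fin n, Polynomial.monomial (i + 1 : ℕ) (Ideal.Quotient.mk q (y i)) +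
      Polynomial.C (Ideal.Quotient.mk q w)
  have hbad (q : Ideal A) (hq : q ∈ P) : {c : k | (f q).IsRoot (algebraMap k (A ⧸ q) c)}.Finite := by
    have := hprime q hq
    refine Set.Finite.preimage (f := algebraMap k (A ⧸ q))
      (FaithfulSMul.algebraMap_injective k (A ⧸ q)).injOn
      (Polynomial.finite_setOfPred_isRoot fun h0 => hw q hq ?_)
    rw [Ideal.span_le]
    rintro z (rfl | ⟨i, rfl⟩)
    · have := congrArg (Polynomial.coeff · 0) h0
      simpa [f, Polynomial.coeff_monomial, Ideal.Quotient.eq_zero_iff_mem] using this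
    · have := congrArg (Polynomial.coeff · (i + 1 : ℕ)) h0
      simpa [f, Polynomial.coeff_monomial, Ideal.Quotient.eq_zero_iff_mem, Polynomial.coeff_C,
        Fin.val_inj] using this
  obtain ⟨c, hc⟩ := (hP.biUnion hbad).exists_notMem
  refine ⟨fun i => algebraMap k A c ^ (i + 1 : ℕ), fun q hq hmem => hc ?_⟩
  simp only [Set.mem_iUnion]
  refine ⟨q, hq, ?_⟩
  rw [← Ideal.Quotient.eq_zero_iff_mem] at hmem
  have hcq : algebraMap k (A ⧸ q) c = Ideal.Quotient.mk q (algebraMap k A c) := rfl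
  rw [Set.mem_ofPred_eq, Polynomial.IsRoot, hcq, ← hmem]
  simp [f, Polynomial.eval_finsetSum, Polynomial.eval_monomial, mul_comm]

/-- If `b` lies in every maximal ideal and `A ⧸ (b)` has finite length, then every element outside
the minimal primes has finite length. -/
theorem hasFinitePrincipalLength_of_forall_notMem_minimalPrimes [IsNoetherianRing A] [IsReduced A]
    {b : A} (hb : HasFinitePrincipalLength R b) (hjac : ∀ m : Ideal A, m.IsMaximal → b ∈ m)
    {a : A} (ha : ∀ q ∈ minimalPrimes A, a ∉ q) : HasFinitePrincipalLength R a := by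
  have hart : IsArtinianRing (A ⧸ Ideal.span {b}) := by
    have := Module.length_ne_top_iff.1 hb.2
    have : IsArtinian R (A ⧸ Ideal.span {b}) := (isFiniteLength_iff_isNoetherian_isArtinian.1 this).2
    have : IsArtinian A (A ⧸ Ideal.span {b}) := isArtinian_of_tower R this
    exact isArtinian_of_tower A this
  have hrad : b ∈ (Ideal.span {a}).radical := by
    rw [Ideal.radical_eq_sInf, Ideal.mem_sInf]
    rintro P ⟨haP, hP⟩
    obtain ⟨m, hm, hPm⟩ := P.exists_le_maximal hP.ne_top
    have hbm := hjac m hm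
    have hmin : m ∈ (Ideal.span {b}).minimalPrimes := by
      refine ⟨⟨hm.isPrime, by simpa [Ideal.span_le] using hbm⟩, fun Q ⟨hQ, hbQ⟩ hQm => ?_⟩
      have hker : RingHom.ker (Ideal.Quotient.mk (Ideal.span {b})) ≤ Q := by
        rwa [Ideal.mk_ker]
      have : (Q.map (Ideal.Quotient.mk (Ideal.span {b}))).IsPrime :=
        Ideal.map_isPrime_of_surjective Ideal.Quotient.mk_surjective hker
      have hmax : (Q.map (Ideal.Quotient.mk (Ideal.span {b}))).IsMaximal :=
        IsArtinianRing.isMaximal_of_isPrime _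
      have := Ideal.comap_isMaximal_of_surjective _ Ideal.Quotient.mk_surjective (K := Q.map _)
        (H := hmax)
      rw [Ideal.comap_map_of_surjective' _ Ideal.Quotient.mk_surjective, sup_of_le_left hker] at this
      exact (this.eq_of_le hm.ne_top hQm).ge
    have hheight := Ideal.height_le_one_of_isPrincipal_of_mem_minimalPrimes _ _ hmin
    rcases hPm.eq_or_lt with rfl | hlt
    · exact hbm
    · exfalso
      have hPmin : P ∈ minimalPrimes A := by
        have := (Ideal.height_le_iff (n := 1)).1 hheight P hP hlt
        rw [Nat.cast_one, Order.lt_one_iff] at this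
        exact Ideal.height_eq_zero_iff.1 this
      exact ha P hPmin (haP (Ideal.mem_span_singleton_self a))
  obtain ⟨N, hN⟩ := hrad
  exact (hb.pow N).of_dvd (Ideal.mem_span_singleton.1 hN)

/-- Over a reduced Noetherian algebra over an infinite field, the cokernel of a square matrix has
the same length as the quotient by its determinant. -/
theorem Matrix.cokerLength_eq_principalLength_det_of_isReduced (k : Type*) [Field k] [Infinite k]
    [Algebra k A] [IsNoetherianRing A] [IsReduced A] {n : ℕ} (B : Matrix (Fin n) (Fin n) A)
    (hB : HasFinitePrincipalLength R B.det) : B.cokerLength R = principalLength R B.det := by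
  let A' := Localization (oneModSubmonoid B.det)
  have : IsNoetherianRing A' := IsLocalization.isNoetherianRing (oneModSubmonoid B.det) A' ‹_›
  have : IsReduced A' := inferInstanceAs (IsReduced (Localization _))
  have hdet : (B.map (algebraMap A A')).det = algebraMap A A' B.det := (RingHom.map_det _ _).symm
  have hb : HasFinitePrincipalLength R (algebraMap A A' B.det) :=
    ⟨IsLocalization.map_nonZeroDivisors_le (oneModSubmonoid B.det) A' ⟨_, hB.1, rfl⟩, by
      rw [principalLength_map_localization_oneModSubmonoid]
      exact hB.2⟩
  rw [← principalLength_map_localization_oneModSubmonoid R B.det A', ← hdet,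
    ← Matrix.cokerLength_map_localization_oneModSubmonoid R B A']
  refine Matrix.cokerLength_eq_principalLength_det R (fun m y w x hx hmem => ?_) n _ (hdet ▸ hb)
  obtain ⟨t, ht⟩ := exists_sum_add_notMem_of_infinite k (minimalPrimes A')
    (minimalPrimes.finite_of_isNoetherianRing A') (fun q hq => hq.1.1) y w fun q hq hle =>
      notMem_nonZeroDivisors_of_mem_mem_minimalPrimes (hle hmem) hq hx.1
  exact ⟨t, hasFinitePrincipalLength_of_forall_notMem_minimalPrimes R hb
    (fun I hI => algebraMap_mem_of_isMaximal_localization_oneModSubmonoid I) ht⟩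

end ZariskiLocalization

section RegularLocal

open IsLocalRing in
/-- If the quotient of a Noetherian local ring by a regular sequence is regular, then the members of
the sequence are linearly independent modulo the square of the maximal ideal. -/
theorem det_notMem_maximalIdeal_of_isRegular {L S : Type*} [CommRing L] [IsNoetherianRing L]
    [IsLocalRing L] [CommRing S] [IsLocalRing S] {p : ℕ} {hs gs : Fin p → L}
    (hreg : RingTheory.Sequence.IsRegular L (List.ofFn hs)) (hgs : ∀ j, gs j ∈ maximalIdeal L)
    {b : Matrix (Fin p) (Fin p) L} (hb : ∀ i, hs i - ∑ j, b i j * gs j ∈ maximalIdeal L ^ 2)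
    (π : L →+* S) (hπ : Function.Surjective π) (hker : RingHom.ker π = Ideal.span (Set.range hs))
    (s : Finset S) (hmax : (Ideal.span (s : Set S)).IsMaximal)
    (hcard : (s.card : WithBot ℕ∞) = ringKrullDim S) : b.det ∉ maximalIdeal L := by
  classical
  intro hdet
  have hdet' : (b.map (residue L)).det = 0 := by
    rw [← RingHom.mapMatrix_apply, ← RingHom.map_det]
    exact (residue_eq_zero_iff _).2 hdet
  obtain ⟨v, hv0, hv⟩ := Matrix.exists_vecMul_eq_zero_iff.2 hdet'
  choose c hc using fun i => residue_surjective (R := L) (v i)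
  obtain ⟨i₀, hi₀⟩ := Function.ne_iff.1 hv0
  have hunit : IsUnit (c i₀) := by
    rw [← residue_ne_zero_iff_isUnit, hc]
    exact hi₀
  have hmem (i : Fin p) : hs i ∈ maximalIdeal L := by
    rw [← sub_add_cancel (hs i) (∑ j, b i j * gs j)]
    exact add_mem (Ideal.pow_le_self two_ne_zero (hb i))
      (sum_mem fun j _ => Ideal.mul_mem_left _ _ (hgs j))
  have hcomb : ∑ i, c i * hs i ∈ maximalIdeal L ^ 2 := by
    have hsplit : ∑ i, c i * hs i = ∑ i, c i * (hs i - ∑ j, b i j * gs j) +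
        ∑ j, (∑ i, c i * b i j) * gs j := by
      simp only [mul_sub, Finset.sum_sub_distrib, Finset.mul_sum, Finset.sum_mul]
      rw [Finset.sum_comm (s := Finset.univ) (t := Finset.univ) (f := fun j i => c i * b i j * gs j)]
      simp [mul_assoc]
    rw [hsplit]
    refine add_mem (sum_mem fun i _ => Ideal.mul_mem_left _ _ (hb i)) (sum_mem fun j _ => ?_)
    rw [pow_two]
    refine Ideal.mul_mem_mul ?_ (hgs j)
    rw [← residue_eq_zero_iff, map_sum]
    simpa [Matrix.vecMul, dotProduct, hc] using congrFun hv j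
  let s' : Finset L := s.image (Function.surjInv hπ)
  let t : Finset L := s' ∪ (Finset.univ.erase i₀).image hs
  have hs' : Ideal.map π (Ideal.span (s' : Set L)) = Ideal.span (s : Set S) := by
    rw [Ideal.map_span, Finset.coe_image, Set.image_image]
    simp [Function.surjInv_eq hπ]
  have hm : maximalIdeal L = Ideal.span (s' : Set L) ⊔ Ideal.span (Set.range hs) := by
    rw [← hker, ← Ideal.comap_map_of_surjective' _ hπ, hs']
    exact (eq_maximalIdeal (Ideal.comap_isMaximal_of_surjective _ hπ)).symm
  have hi₀mem : hs i₀ ∈ Ideal.span (t : Set L) ⊔ maximalIdeal L • maximalIdeal L := by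
    rw [← Ideal.unit_mul_mem_iff_mem _ hunit]
    have hsplit := Finset.add_sum_erase Finset.univ (fun i => c i * hs i) (Finset.mem_univ i₀)
    rw [eq_sub_of_add_eq hsplit]
    refine sub_mem (Ideal.mem_sup_right ?_) (Ideal.mem_sup_left (sum_mem fun i hi => ?_))
    · rwa [smul_eq_mul, ← pow_two]
    · exact Ideal.mul_mem_left _ _ (Ideal.subset_span
        (Finset.mem_coe.2 (Finset.mem_union_right _ (Finset.mem_image_of_mem _ hi))))
  have hle : maximalIdeal L ≤ Ideal.span (t : Set L) ⊔ maximalIdeal L • maximalIdeal L := by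
    conv_lhs => rw [hm]
    refine sup_le (le_sup_of_le_left (Ideal.span_mono (by simp [t]))) ?_
    rw [Ideal.span_le]
    rintro _ ⟨i, rfl⟩
    by_cases hi : i = i₀
    · exact hi ▸ hi₀mem
    · exact Ideal.mem_sup_left (Ideal.subset_span (Finset.mem_coe.2
        (Finset.mem_union_right _ (Finset.mem_image_of_mem _ (by simpa using hi)))))
  have hle' := Submodule.le_of_le_smul_of_le_jacobson_bot (IsNoetherian.noetherian _)
    (maximalIdeal_le_jacobson _) hle
  have hts : Ideal.span (t : Set L) ≤ maximalIdeal L := by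
    rw [Ideal.span_le]
    intro x hx
    rcases Finset.mem_union.1 (Finset.mem_coe.1 hx) with hx | hx
    · rw [hm]
      exact Ideal.mem_sup_left (Ideal.subset_span hx)
    · obtain ⟨i, -, rfl⟩ := Finset.mem_image.1 hx
      exact hmem i
  have hheight : (maximalIdeal L).height ≤ t.card :=
    Ideal.height_le_card_of_mem_minimalPrimes_span_finset (by
      rw [le_antisymm hts hle', Ideal.minimalPrimes_eq_subsingleton_self]; rfl)
  have htcard : t.card < s.card + p := by
    have h1 : t.card ≤ s'.card + ((Finset.univ.erase i₀).image hs).card := Finset.card_union_le _ _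
    have h2 : s'.card ≤ s.card := Finset.card_image_le
    have h3 : ((Finset.univ.erase i₀).image hs).card ≤ (Finset.univ.erase i₀).card :=
      Finset.card_image_le
    rw [Finset.card_erase_of_mem (Finset.mem_univ _), Finset.card_univ, Fintype.card_fin] at h3
    have := i₀.pos
    omega
  have hdim := ringKrullDim_add_length_eq_ringKrullDim_of_isRegular (List.ofFn hs) hreg
  have hquot : Ideal.ofList (List.ofFn hs) = RingHom.ker π := by
    rw [hker, Ideal.ofList]
    congr 1
    ext x
    simp [List.mem_ofFn]
  rw [ringKrullDim_eq_of_ringEquiv ((Ideal.quotEquivOfEq hquot).trans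
    (RingHom.quotientKerEquivOfSurjective hπ)), ← hcard, List.length_ofFn,
    ← maximalIdeal_height_eq_ringKrullDim] at hdim
  have : ((s.card + p : ℕ) : ℕ∞) ≤ t.card := by
    refine le_trans (le_of_eq ?_) hheight
    exact_mod_cast hdim
  exact absurd (by exact_mod_cast this) htcard.not_ge

theorem ker_localRingHom_quotientMk {O : Type*} [CommRing O] (h q : Ideal O) [hq : q.IsPrime]
    [hP : (q.map (Ideal.Quotient.mk h)).IsPrime]
    (hcomap : q = (q.map (Ideal.Quotient.mk h)).comap (Ideal.Quotient.mk h)) :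
    RingHom.ker (Localization.localRingHom q (q.map (Ideal.Quotient.mk h)) _ hcomap) =
      h.map (algebraMap O (Localization.AtPrime q)) := by
  apply le_antisymm
  · intro z hz
    obtain ⟨x, s, rfl⟩ := IsLocalization.exists_mk'_eq q.primeCompl z
    rw [RingHom.mem_ker, Localization.localRingHom_mk', IsLocalization.mk'_eq_zero_iff] at hz
    obtain ⟨⟨c, hc⟩, hcx⟩ := hz
    obtain ⟨c, rfl⟩ := Ideal.Quotient.mk_surjective c
    rw [← _root_.map_mul, Ideal.Quotient.eq_zero_iff_mem] at hcx
    have hcq : c ∈ q.primeCompl := fun hcq => hc (Ideal.mem_map_of_mem _ hcq)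
    rw [IsLocalization.mem_map_algebraMap_iff q.primeCompl]
    refine ⟨(⟨c * x, hcx⟩, ⟨c, hcq⟩ * s), ?_⟩
    rw [Submonoid.coe_mul, _root_.map_mul, mul_left_comm, IsLocalization.mk'_spec, _root_.map_mul]
  · rw [Ideal.map_le_iff_le_comap]
    intro x hx
    rw [Ideal.mem_comap, RingHom.mem_ker, Localization.localRingHom_to_map,
      Ideal.Quotient.eq_zero_iff_mem.2 hx, _root_.map_zero]

theorem det_notMem_of_regularAtImage {O : Type*} [CommRing O] [IsNoetherianRing O]
    {q : Ideal O} [hq : q.IsPrime] {p : ℕ} {hs gs : Fin p → O}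
    (hreg : RingTheory.Sequence.IsRegular O (List.ofFn hs)) (hgs : ∀ j, gs j ∈ q)
    (b : Matrix (Fin p) (Fin p) O) (hb : ∀ i, hs i - ∑ j, b i j * gs j ∈ q ^ 2)
    (hreg' : regularAtImage (Ideal.span (Set.range hs)) q) : b.det ∉ q := by
  set h := Ideal.span (Set.range hs) with hh
  have hmem (i : Fin p) : hs i ∈ q := by
    rw [← sub_add_cancel (hs i) (∑ j, b i j * gs j)]
    exact add_mem (Ideal.pow_le_self two_ne_zero (hb i))
      (sum_mem fun j _ => Ideal.mul_mem_left _ _ (hgs j))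
  have hle : h ≤ q := by
    rw [hh, Ideal.span_le]
    rintro _ ⟨i, rfl⟩
    exact hmem i
  have hker : RingHom.ker (Ideal.Quotient.mk h) ≤ q := by rwa [Ideal.mk_ker]
  have hP : (q.map (Ideal.Quotient.mk h)).IsPrime :=
    Ideal.map_isPrime_of_surjective Ideal.Quotient.mk_surjective hker
  have hcomap : q = (q.map (Ideal.Quotient.mk h)).comap (Ideal.Quotient.mk h) := by
    rw [Ideal.comap_map_of_surjective' _ Ideal.Quotient.mk_surjective, sup_of_le_left hker]
  obtain ⟨-, -, s, hmax, hcard⟩ := hreg' hP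
  let L := Localization.AtPrime q
  have hmap (x : O) : algebraMap O L x ∈ IsLocalRing.maximalIdeal L ↔ x ∈ q :=
    IsLocalization.AtPrime.to_map_mem_maximal_iff L q x
  have hqm : q.map (algebraMap O L) ≤ IsLocalRing.maximalIdeal L :=
    Ideal.map_le_iff_le_comap.2 fun x hx => (hmap x).2 hx
  have := det_notMem_maximalIdeal_of_isRegular (L := L) (hs := algebraMap O L ∘ hs)
    (gs := algebraMap O L ∘ gs) (b := b.map (algebraMap O L))
    (by
      rw [← List.map_ofFn]
      exact hreg.toIsWeaklyRegular.isRegular_of_isLocalization_of_mem L q (by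
        simpa [List.mem_ofFn] using hmem))
    (fun j => (hmap _).2 (hgs j))
    (fun i => by
      have := Ideal.pow_right_mono hqm 2 (Ideal.map_pow (algebraMap O L) q 2 ▸
        Ideal.mem_map_of_mem (algebraMap O L) (hb i))
      simpa using this)
    (Localization.localRingHom q (q.map (Ideal.Quotient.mk h)) _ hcomap)
    ((RingHom.surjectiveOnStalks_of_surjective
      Ideal.Quotient.mk_surjective).localRingHom_surjective _ _ hcomap)
    (by rw [ker_localRingHom_quotientMk, hh, Ideal.map_span, Set.range_comp]) s hmax hcard
  rwa [← RingHom.mapMatrix_apply, ← RingHom.map_det, hmap] at this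

end RegularLocal

section ConormalTorsion

theorem ofList_ofFn {O : Type*} [CommRing O] {n : ℕ} (gs : Fin n → O) :
    Ideal.ofList (List.ofFn gs) = Ideal.span (Set.range gs) := by
  rw [Ideal.ofList]
  congr 1
  ext x
  simp [List.mem_ofFn]

/-- The relations between the members of a weakly regular sequence have coefficients in the ideal
it generates. -/
theorem mem_span_range_of_sum_mul_eq_zero {O : Type*} [CommRing O] {n : ℕ} {gs : Fin n → O}
    (hreg : RingTheory.Sequence.IsWeaklyRegular O (List.ofFn gs)) {c : Fin n → O}
    (hc : ∑ i, c i * gs i = 0) (i : Fin n) : c i ∈ Ideal.span (Set.range gs) := by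
  induction n with
  | zero => exact i.elim0
  | succ n ih =>
    rw [List.ofFn_succ', List.concat_eq_append,
      RingTheory.Sequence.isWeaklyRegular_append_iff,
      RingTheory.Sequence.isWeaklyRegular_singleton_iff, ofList_ofFn] at hreg
    obtain ⟨hinit, hlast⟩ := hreg
    rw [Fin.sum_univ_castSucc] at hc
    have hcl : c (Fin.last n) ∈ Ideal.span (Set.range fun i : Fin n => gs i.castSucc) := by
      have hmem : gs (Fin.last n) * c (Fin.last n) ∈
          Ideal.span (Set.range fun i : Fin n => gs i.castSucc) := by
        rw [mul_comm, eq_neg_of_add_eq_zero_right hc]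
        exact neg_mem (sum_mem fun i _ => Ideal.mul_mem_left _ _ (Ideal.subset_span ⟨i, rfl⟩))
      set I := Ideal.span (Set.range fun i : Fin n => gs i.castSucc)
      have hI : (I • ⊤ : Submodule O O) = I := by rw [smul_eq_mul, Ideal.mul_top]
      rw [hI] at hlast
      rw [← Ideal.Quotient.eq_zero_iff_mem]
      apply hlast
      simp only [smul_zero]
      exact Ideal.Quotient.eq_zero_iff_mem.2 hmem
    obtain ⟨d, hd⟩ := (Submodule.mem_span_range_iff_exists_fun O).1 hcl
    have hle : Ideal.span (Set.range fun i : Fin n => gs i.castSucc) ≤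
        Ideal.span (Set.range gs) :=
      Ideal.span_mono (by rintro _ ⟨j, rfl⟩; exact ⟨_, rfl⟩)
    have hrel : ∑ j : Fin n, (c j.castSucc + d j * gs (Fin.last n)) * gs j.castSucc = 0 := by
      rw [← hc, ← hd, Finset.sum_mul, ← Finset.sum_add_distrib]
      refine Finset.sum_congr rfl fun j _ => ?_
      rw [smul_eq_mul]
      ring
    refine Fin.lastCases (hle hcl) (fun j => ?_) i
    rw [← add_sub_cancel_right (c j.castSucc) (d j * gs (Fin.last n))]
    exact sub_mem (hle (ih hinit hrel j))
      (Ideal.mul_mem_left _ _ (Ideal.subset_span ⟨_, rfl⟩))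

theorem sum_mul_mem_sq_iff {O : Type*} [CommRing O] {n : ℕ} {gs : Fin n → O}
    (hreg : RingTheory.Sequence.IsWeaklyRegular O (List.ofFn gs)) {c : Fin n → O} :
    ∑ i, c i * gs i ∈ Ideal.span (Set.range gs) ^ 2 ↔
      ∀ i, c i ∈ Ideal.span (Set.range gs) := by
  refine ⟨fun hc i => ?_, fun hc => sum_mem fun i _ => ?_⟩
  · rw [pow_two, ← smul_eq_mul, Ideal.span, Submodule.mem_ideal_smul_span_iff_exists_sum] at hc
    obtain ⟨a, ha, hsum⟩ := hc
    rw [Finsupp.sum_fintype _ _ (by simp)] at hsum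
    have hrel : ∑ i, (c i - a i) * gs i = 0 := by
      simp only [sub_mul, Finset.sum_sub_distrib, ← hsum, smul_eq_mul, sub_self]
    rw [← sub_add_cancel (c i) (a i)]
    exact add_mem (mem_span_range_of_sum_mul_eq_zero hreg hrel i) (ha i)
  · rw [pow_two]
    exact Ideal.mul_mem_mul (hc i) (Ideal.subset_span ⟨i, rfl⟩)

variable {O : Type*} [CommRing O] {p n : ℕ}

theorem sum_extend_castLE (hpn : p ≤ n) (gs : Fin n → O) (c : Fin p → O) :
    ∑ i, Function.extend (Fin.castLE hpn) c 0 i * gs i = ∑ j, c j * gs (Fin.castLE hpn j) := by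
  refine (Fintype.sum_of_injective (Fin.castLE hpn) (Fin.castLE_injective hpn) _ _ ?_ ?_).symm
  · intro i hi
    rw [Function.extend_apply' _ _ _ hi]
    simp
  · intro j
    rw [(Fin.castLE_injective hpn).extend_apply]

theorem sum_mul_mem_sq_sup_iff (hpn : p ≤ n) {hs : Fin p → O} {gs : Fin n → O}
    (hreg : RingTheory.Sequence.IsWeaklyRegular O (List.ofFn gs)) {b : Matrix (Fin p) (Fin p) O}
    (hcong : ∀ i, hs i - ∑ j, b i j * gs (Fin.castLE hpn j) ∈ Ideal.span (Set.range gs) ^ 2)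
    (c : Fin n → O) :
    ∑ i, c i * gs i ∈ Ideal.span (Set.range gs) ^ 2 ⊔ Ideal.span (Set.range hs) ↔
      ∃ a : Fin p → O, ∀ i, c i - Function.extend (Fin.castLE hpn) (Matrix.vecMul a b) 0 i ∈
        Ideal.span (Set.range gs) := by
  have hlin (a : Fin p → O) :
      ∑ i, (c i - Function.extend (Fin.castLE hpn) (Matrix.vecMul a b) 0 i) * gs i =
        ∑ i, c i * gs i - ∑ i, a i * hs i +
          ∑ i, a i * (hs i - ∑ j, b i j * gs (Fin.castLE hpn j)) := by
    simp only [sub_mul, Finset.sum_sub_distrib, sum_extend_castLE, Matrix.vecMul, dotProduct,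
      mul_sub, Finset.mul_sum, Finset.sum_mul]
    rw [Finset.sum_comm (f := fun j i => a i * b i j * gs (Fin.castLE hpn j))]
    simp [mul_assoc]
  have hcor (a : Fin p → O) : ∑ i, a i * (hs i - ∑ j, b i j * gs (Fin.castLE hpn j)) ∈
      Ideal.span (Set.range gs) ^ 2 := sum_mem fun i _ => Ideal.mul_mem_left _ _ (hcong i)
  simp only [← sum_mul_mem_sq_iff hreg, hlin]
  constructor
  · intro hmem
    obtain ⟨x, hx, y, hy, hxy⟩ := Submodule.mem_sup.1 hmem
    obtain ⟨a, rfl⟩ := (Submodule.mem_span_range_iff_exists_fun O).1 hy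
    refine ⟨a, add_mem ?_ (hcor a)⟩
    rw [← hxy]
    simpa using hx
  · rintro ⟨a, ha⟩
    rw [← sub_add_cancel (∑ i, c i * gs i) (∑ i, a i * hs i)]
    refine add_mem (Ideal.mem_sup_left ?_) (Ideal.mem_sup_right
      (sum_mem fun i _ => Ideal.mul_mem_left _ _ (Ideal.subset_span ⟨i, rfl⟩)))
    exact (add_mem_cancel_right (hcor a)).1 ha

/-- The torsion of the conormal module is the cokernel of the transition matrix. -/
theorem nonempty_conormalTorsion_equiv (hpn : p ≤ n) {hs : Fin p → O} {gs : Fin n → O}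
    {h g : Ideal O} (hh : h = Ideal.span (Set.range hs)) (hg : g = Ideal.span (Set.range gs))
    (hreg : RingTheory.Sequence.IsWeaklyRegular O (List.ofFn gs)) (b : Matrix (Fin p) (Fin p) O)
    (hcong : ∀ i, hs i - ∑ j, b i j * gs (Fin.castLE hpn j) ∈ g ^ 2)
    (hdet : Ideal.Quotient.mk g b.det ∈ nonZeroDivisors (O ⧸ g)) :
    Nonempty (↥(conormalTorsion h g) ≃ₗ[O]
      ((Fin p → O ⧸ g) ⧸ LinearMap.range (b.map (Ideal.Quotient.mk g)).transpose.mulVecLin)) := by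
  have hgs (i : Fin n) : gs i ∈ g := hg ▸ Ideal.subset_span ⟨i, rfl⟩
  have hkey (c : Fin n → O) : ∑ i, c i * gs i ∈ g ^ 2 ⊔ h ↔ ∃ a : Fin p → O, ∀ i,
      c i - Function.extend (Fin.castLE hpn) (Matrix.vecMul a b) 0 i ∈ g := by
    subst hh hg
    exact sum_mul_mem_sq_sup_iff hpn hreg hcong c
  let φ : (Fin p → O) →ₗ[O] Conormal h g := Fintype.linearCombination O fun j =>
    (conormalRel h g).mkQ ⟨gs (Fin.castLE hpn j), hgs _⟩
  have hmk (f : g) : (conormalRel h g).mkQ f = 0 ↔ (f : O) ∈ g ^ 2 ⊔ h := by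
    rw [Submodule.mkQ_apply, Submodule.Quotient.mk_eq_zero]
    rfl
  have hφ (c : Fin p → O) : φ c = (conormalRel h g).mkQ
      (∑ j, c j • (⟨gs (Fin.castLE hpn j), hgs _⟩ : g)) := by
    rw [map_sum]
    rfl
  have hφker (c : Fin p → O) : φ c = 0 ↔
      ∃ a : Fin p → O, ∀ j, c j - Matrix.vecMul a b j ∈ g := by
    have hcoe : ((∑ j, c j • (⟨gs (Fin.castLE hpn j), hgs _⟩ : g) : g) : O) =
        ∑ i, Function.extend (Fin.castLE hpn) c 0 i * gs i := by
      rw [sum_extend_castLE]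
      simp
    rw [hφ, hmk, hcoe, hkey]
    refine exists_congr fun a => ⟨fun ha j => ?_, fun ha i => ?_⟩
    · simpa only [(Fin.castLE_injective hpn).extend_apply] using ha (Fin.castLE hpn j)
    · by_cases hi : ∃ j, Fin.castLE hpn j = i
      · obtain ⟨j, rfl⟩ := hi
        simpa only [(Fin.castLE_injective hpn).extend_apply] using ha j
      · simp [Function.extend_apply' _ _ _ hi]
  have hrange : LinearMap.range φ = conormalTorsion h g := by
    apply le_antisymm
    · rintro _ ⟨c, rfl⟩
      refine ⟨b.det, hdet, ?_⟩
      rw [← map_smul, hφker]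
      refine ⟨Matrix.vecMul c b.adjugate, fun j => ?_⟩
      rw [Matrix.vecMul_vecMul, Matrix.adjugate_mul, Matrix.vecMul_smul, Matrix.vecMul_one, sub_self]
      exact g.zero_mem
    · rintro x ⟨β, hβ, hβx⟩
      obtain ⟨⟨f, hf⟩, rfl⟩ := Submodule.mkQ_surjective _ x
      obtain ⟨c, hc⟩ := (Submodule.mem_span_range_iff_exists_fun O).1 (hg ▸ hf)
      simp only [smul_eq_mul] at hc
      rw [← map_smul, hmk] at hβx
      have hβf : β * f = ∑ i, (β * c i) * gs i := by
        simp only [← hc, Finset.mul_sum, mul_assoc]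
      obtain ⟨a, ha⟩ := (hkey fun i => β * c i).1 (hβf ▸ hβx)
      refine ⟨c ∘ Fin.castLE hpn, ?_⟩
      rw [hφ, ← sub_eq_zero, ← map_sub, hmk]
      have hdiff : ((∑ j, (c ∘ Fin.castLE hpn) j • (⟨gs (Fin.castLE hpn j), hgs _⟩ : g) -
          ⟨f, hf⟩ : g) : O) =
          ∑ i, (Function.extend (Fin.castLE hpn) (c ∘ Fin.castLE hpn) 0 i - c i) * gs i := by
        simp only [sub_mul, Finset.sum_sub_distrib, hc, sum_extend_castLE]
        simp
      rw [hdiff, hkey]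
      refine ⟨0, fun i => ?_⟩
      by_cases hi : ∃ j, Fin.castLE hpn j = i
      · obtain ⟨j, rfl⟩ := hi
        simp [(Fin.castLE_injective hpn).extend_apply]
      · have hai := ha i
        simp only [Function.extend_apply' _ _ _ hi, Pi.zero_apply, sub_zero, zero_sub,
          neg_mem_iff] at hai ⊢
        rw [← Ideal.Quotient.eq_zero_iff_mem, _root_.map_mul] at hai
        rw [← Ideal.Quotient.eq_zero_iff_mem]
        exact (mem_nonZeroDivisors_iff.1 hβ).1 _ hai
  let red : (Fin p → O) →ₗ[O] (Fin p → O ⧸ g) := (Submodule.mkQ g).compLeft (Fin p)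
  let N := LinearMap.range (b.map (Ideal.Quotient.mk g)).transpose.mulVecLin
  let ψ : (Fin p → O) →ₗ[O] ((Fin p → O ⧸ g) ⧸ N) := N.mkQ.restrictScalars O ∘ₗ red
  have hred : Function.Surjective red := fun y => by
    choose x hx using fun j => Ideal.Quotient.mk_surjective (y j)
    exact ⟨x, funext hx⟩
  have hψ : Function.Surjective ψ := (Submodule.mkQ_surjective N).comp hred
  have hker : LinearMap.ker φ = LinearMap.ker ψ := by
    ext c
    have hmem : c ∈ LinearMap.ker ψ ↔ red c ∈ N := by
      rw [LinearMap.mem_ker]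
      exact Submodule.Quotient.mk_eq_zero N
    rw [hmem, LinearMap.mem_ker, hφker]
    have hmul (a : Fin p → O) : (b.map (Ideal.Quotient.mk g)).transpose.mulVecLin (red a) =
        red (Matrix.vecMul a b) := by
      rw [Matrix.mulVecLin_apply, Matrix.mulVec_transpose]
      ext j
      exact (RingHom.map_vecMul (Ideal.Quotient.mk g) b a j).symm
    have heq (a : Fin p → O) : (∀ j, c j - Matrix.vecMul a b j ∈ g) ↔
        red (Matrix.vecMul a b) = red c := by
      rw [eq_comm, funext_iff]
      exact forall_congr' fun j => Ideal.Quotient.eq.symm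
    simp only [heq, ← hmul]
    exact ⟨fun ⟨a, ha⟩ => ⟨_, ha⟩, fun ⟨a, ha⟩ => by
      obtain ⟨a, rfl⟩ := hred a
      exact ⟨a, ha⟩⟩
  exact ⟨(LinearEquiv.ofEq _ _ hrange.symm).trans (φ.quotKerEquivRange.symm.trans
    ((Submodule.quotEquivOfEq _ _ hker).trans (ψ.quotKerEquivOfSurjective hψ)))⟩

end ConormalTorsion

section FiniteLength

/-- A matrix whose cokernel has finite length has a determinant of finite colength. -/
theorem Matrix.principalLength_det_ne_top {A : Type*} [CommRing A] [IsNoetherianRing A] {ι : Type*}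
    [Fintype ι] [DecidableEq ι] (B : Matrix ι ι A) (hB : B.cokerLength A ≠ ⊤) :
    principalLength A B.det ≠ ⊤ := by
  have hart : IsArtinian A ((ι → A) ⧸ LinearMap.range B.mulVecLin) :=
    (isFiniteLength_iff_isNoetherian_isArtinian.1 (Module.length_ne_top_iff.1 hB)).2
  have hmax (P : Ideal A) (hP : P.IsPrime) (hdet : B.det ∈ P) : P.IsMaximal := by
    have hdet' : (B.map (Ideal.Quotient.mk P)).det = 0 := by
      rw [← RingHom.mapMatrix_apply, ← RingHom.map_det]
      exact Ideal.Quotient.eq_zero_iff_mem.2 hdet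
    obtain ⟨v, hv0, hv⟩ := Matrix.exists_vecMul_eq_zero_iff.2 hdet'
    obtain ⟨i₀, hi₀⟩ := Function.ne_iff.1 hv0
    let f : (ι → A) →ₗ[A] A ⧸ P := Fintype.linearCombination A v
    have hf : LinearMap.range B.mulVecLin ≤ LinearMap.ker f := by
      rintro _ ⟨x, rfl⟩
      have hfx : f (B.mulVec x) = v ⬝ᵥ (B.map (Ideal.Quotient.mk P)).mulVec
          (Ideal.Quotient.mk P ∘ x) := by
        simp only [f, Fintype.linearCombination_apply, dotProduct]
        refine Finset.sum_congr rfl fun i _ => ?_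
        rw [← RingHom.map_mulVec, Algebra.smul_def, mul_comm]
        rfl
      rw [LinearMap.mem_ker, Matrix.mulVecLin_apply, hfx, Matrix.dotProduct_mulVec, hv,
        zero_dotProduct]
    let F := (LinearMap.range B.mulVecLin).liftQ f hf
    have hv₀ (d : A ⧸ P) : d * v i₀ ∈ LinearMap.range F := by
      obtain ⟨d, rfl⟩ := Ideal.Quotient.mk_surjective d
      refine ⟨Submodule.Quotient.mk (Pi.single i₀ d), ?_⟩
      simp only [F, Submodule.liftQ_apply, f, Fintype.linearCombination_apply_single]
      rfl
    let E : (A ⧸ P) →ₗ[A] LinearMap.range F :=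
      (((LinearMap.mulRight (A ⧸ P) (v i₀))).restrictScalars A).codRestrict _ hv₀
    have hE : Function.Injective E := fun x y hxy =>
      mul_right_cancel₀ hi₀ (congrArg Subtype.val hxy)
    have hArt : IsArtinian A (A ⧸ P) := isArtinian_of_injective E hE
    have : IsArtinianRing (A ⧸ P) := isArtinian_of_tower A hArt
    exact Ideal.Quotient.maximal_of_isField _ (IsArtinianRing.isField_of_isDomain _)
  have : IsArtinianRing (A ⧸ Ideal.span {B.det}) := by
    rw [isArtinianRing_iff_krullDimLE_zero, Ring.krullDimLE_zero_iff]
    intro J hJ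
    have hcomap := hmax (J.comap (Ideal.Quotient.mk _)) inferInstance (by
      rw [Ideal.mem_comap, Ideal.Quotient.eq_zero_iff_mem.2 (Ideal.mem_span_singleton_self _)]
      exact J.zero_mem)
    have hmap := Ideal.map_eq_top_or_isMaximal_of_surjective
      (Ideal.Quotient.mk (Ideal.span {B.det})) Ideal.Quotient.mk_surjective hcomap
    rw [Ideal.map_comap_of_surjective _ Ideal.Quotient.mk_surjective] at hmap
    exact hmap.resolve_left hJ.ne_top
  rw [principalLength, Module.length_ne_top_iff, isFiniteLength_iff_isNoetherian_isArtinian]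
  exact ⟨inferInstance, isArtinian_of_surjective_algebraMap
    (Ideal.Quotient.mk_surjective (I := Ideal.span {B.det}))⟩

theorem principalLength_quotientMk {O : Type*} [CommRing O] (g : Ideal O) (x : O) :
    principalLength O (Ideal.Quotient.mk g x) =
      Module.length O (O ⧸ (Ideal.span {x} ⊔ g)) := by
  let φ : O →ₗ[O] ((O ⧸ g) ⧸ Ideal.span {Ideal.Quotient.mk g x}) :=
    (Submodule.mkQ (Ideal.span {Ideal.Quotient.mk g x})).restrictScalars O ∘ₗ Submodule.mkQ g
  have hφ : Function.Surjective φ :=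
    (Submodule.mkQ_surjective _).comp (Submodule.mkQ_surjective _)
  have hker : Ideal.span {x} ⊔ g = LinearMap.ker φ := by
    have hcomap := Ideal.comap_map_of_surjective' (Ideal.Quotient.mk g)
      Ideal.Quotient.mk_surjective (Ideal.span {x})
    rw [Ideal.mk_ker, Ideal.map_span, Set.image_singleton] at hcomap
    rw [← hcomap]
    ext y
    exact (Submodule.Quotient.mk_eq_zero (Ideal.span {Ideal.Quotient.mk g x})).symm
  exact ((Submodule.quotEquivOfEq _ _ hker).trans (φ.quotKerEquivOfSurjective hφ)).length_eq.symm

end FiniteLength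

/-- Proposition `free1`, part 5), the length formula: if `T(M)` has finite length then
`length(T(M)) = length(O/((b) + g))` (lengths over `O/g`, equivalently over `O` since both
modules are killed by `g`). -/
theorem statement15 {k : Type*} [Field k] [CharZero k] {m : ℕ}
    (h g : Ideal (MvPolynomial (Fin m) k)) (hle : h ≤ g)
    [IsReduced (MvPolynomial (Fin m) k ⧸ g)]
    [ConnectedSpace (PrimeSpectrum (MvPolynomial (Fin m) k ⧸ g))]
    {p n : ℕ} (hpn : p ≤ n)
    (hs : Fin p → MvPolynomial (Fin m) k) (gs : Fin n → MvPolynomial (Fin m) k)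
    (hhseq : RingTheory.Sequence.IsRegular (MvPolynomial (Fin m) k) (List.ofFn hs))
    (hhgen : h = Ideal.span (Set.range hs))
    (hgseq : RingTheory.Sequence.IsRegular (MvPolynomial (Fin m) k) (List.ofFn gs))
    (hggen : g = Ideal.span (Set.range gs))
    (hreg : ∀ q ∈ g.minimalPrimes, regularAtImage h q)
    (b : Fin p → Fin p → MvPolynomial (Fin m) k)
    (hcong : ∀ i : Fin p, hs i - ∑ j, b i j * gs (Fin.castLE hpn j) ∈ g ^ 2)
    (hfin : IsFiniteLength (MvPolynomial (Fin m) k) ↥(conormalTorsion h g)) :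
    moduleLength (MvPolynomial (Fin m) k) ↥(conormalTorsion h g) =
      moduleLength (MvPolynomial (Fin m) k)
        (MvPolynomial (Fin m) k ⧸ (Ideal.span {Matrix.det (Matrix.of b)} ⊔ g)) := by
  have hg (i : Fin n) : gs i ∈ g := hggen ▸ Ideal.subset_span ⟨i, rfl⟩
  have hdet : Ideal.Quotient.mk g (Matrix.of b).det ∈
      nonZeroDivisors (MvPolynomial (Fin m) k ⧸ g) := by
    refine mem_nonZeroDivisors_of_forall_notMem_minimalPrimes fun Q hQ hmem => ?_
    have hq : Q.comap (Ideal.Quotient.mk g) ∈ g.minimalPrimes := by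
      rw [Ideal.minimalPrimes_eq_comap]
      exact ⟨Q, hQ, rfl⟩
    have hgq := hq.1.2
    have := hq.1.1
    exact det_notMem_of_regularAtImage hhseq (fun j => hgq (hg (Fin.castLE hpn j))) (Matrix.of b)
      (fun i => Ideal.pow_right_mono hgq 2 (hcong i)) (hhgen ▸ hreg _ hq) hmem
  obtain ⟨e⟩ := nonempty_conormalTorsion_equiv hpn hhgen hggen hgseq.toIsWeaklyRegular
    (Matrix.of b) hcong hdet
  set B := ((Matrix.of b).map (Ideal.Quotient.mk g)).transpose with hB
  have hBdet : B.det = Ideal.Quotient.mk g (Matrix.of b).det := by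
    rw [hB, Matrix.det_transpose, ← RingHom.mapMatrix_apply, ← RingHom.map_det]
  have hsurj : Function.Surjective
      (algebraMap (MvPolynomial (Fin m) k) (MvPolynomial (Fin m) k ⧸ g)) :=
    Ideal.Quotient.mk_surjective
  have hlen : Module.length (MvPolynomial (Fin m) k) ↥(conormalTorsion h g) =
      B.cokerLength (MvPolynomial (Fin m) k) := e.length_eq
  have hcoker : B.cokerLength (MvPolynomial (Fin m) k ⧸ g) ≠ ⊤ := by
    rw [Matrix.cokerLength, ← Module.length_eq_of_surjective hsurj, ← Matrix.cokerLength, ← hlen]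
    exact Module.length_ne_top_iff.2 hfin
  have hgood : HasFinitePrincipalLength (MvPolynomial (Fin m) k) B.det := by
    refine ⟨hBdet ▸ hdet, ?_⟩
    rw [principalLength, Module.length_eq_of_surjective hsurj]
    exact B.principalLength_det_ne_top hcoker
  rw [moduleLength, moduleLength, ← Module.coe_length, ← Module.coe_length, hlen,
    Matrix.cokerLength_eq_principalLength_det_of_isReduced _ k B hgood, hBdet,
    principalLength_quotientMk]
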